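/- Let (q̈_k) be antisymmetric measurable functions on Ω_δ×Ω_δ with ‖q̈_k‖_{L^{1,2}(Ω_δ×Ω_δ)} ≤ 1, converging in the biting sense to q̂ ∈ L^{1,2}(Ω_δ×Ω_δ): there is a nonincreasing sequence of measurable sets E_m ⊆ Ω_δ with |E_m| → 0 such that for every m, ∫_{Ω_δ∖E_m}∫_{Ω_δ} (q̈_k − q̂) p̈ dx' dx → 0 for every measurable p̈ with esssup_{x∈Ω_δ∖E_m}(∫_{Ω_δ} p̈(x,x')² dx')^{1/2} < ∞. Then for every Lipschitz v : ℝⁿ → ℝ vanishing on ℝⁿ ∖ Ω, ∫_{Ω_δ}∫_{Ω_δ} q̈_k(x,x') Ĝ_δ v(x,x') dx' dx → ∫_{Ω_δ}∫_{Ω_δ} q̂(x,x') Ĝ_δ v(x,x') dx' dx; i.e., the nonlocal divergences of q̈_k converge to that of q̂ weakly-* in the dual of W^{1,∞}_0(Ω). -/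

import Mathlib

/-!
Write `D = Ω_δ` and `G = Ĝ_δ v`. Since `v` is Lipschitz, the sections of `G` satisfy
`∫_S G(x,·)² ≤ L² ∫_S |x - x'|² ω_δ(x - x')² dx'` for every measurable `S`. The right-hand side is
bounded, because `K_{2,n} > 0` makes `|z|² ω_δ²` integrable (`kernel_mass_ne_top`), and for `S = E_m`
it tends to zero uniformly in `x` as `|E_m| → 0` (`tendsto_transMass`).

Biting convergence controls the region where the first variable avoids `E_m`, and antisymmetry does
the rest: `q̈_k G` is symmetric, so the integral over `E_m × (D \ E_m)` equals the one over
`(D \ E_m) × E_m`, which biting convergence also covers, with the test function `G · 1_{E_m}(x')`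
(`setIntegral_split_symm`). On the remaining square `E_m × E_m`, Cauchy–Schwarz in `x'`
(`lintegral_enorm_mul_le`) bounds the integral by
`‖q̈_k‖_{L^{1,2}} · sup_x (∫_{E_m} G(x,·)²)^{1/2}`, which is small uniformly in `k`.
The limit `q̂` need not be antisymmetric: its contribution near `E_m` vanishes since `q̂ ∈ L^{1,2}`.
-/


open MeasureTheory ENNReal Metric Filter
open scoped Topology RealInnerProductSpace

noncomputable section

/-- `Ω` has a Lipschitz boundary: near each boundary point, in a suitable direction `v`,
`Ω` coincides with the strict subgraph of a Lipschitz function that is constant in the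
direction `v`. -/
def HasLipschitzBoundary {n : ℕ} (Ω : Set (EuclideanSpace ℝ (Fin n))) : Prop :=
  ∀ x ∈ frontier Ω, ∃ r : ℝ, 0 < r ∧ ∃ v : EuclideanSpace ℝ (Fin n), ‖v‖ = 1 ∧
    ∃ (L : NNReal) (f : EuclideanSpace ℝ (Fin n) → ℝ), LipschitzWith L f ∧
      (∀ y, f y = f (y - ⟪y, v⟫ • v)) ∧
      (∀ y ∈ Metric.ball x r, (y ∈ Ω ↔ ⟪y, v⟫ < f (y - ⟪y, v⟫ • v)))

/-- The constant `K_{2,n} = |𝕊^{n-1}|⁻¹ ∫_{𝕊^{n-1}} (s·e)² ds`, the average of `(s·e)²`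
over the unit sphere, computed with respect to the surface measure `volume.toSphere`. -/
def K2 (n : ℕ) (e : EuclideanSpace ℝ (Fin n)) : ℝ≥0∞ :=
  (∫⁻ s : sphere (0 : EuclideanSpace ℝ (Fin n)) 1,
      ENNReal.ofReal (⟪(s : EuclideanSpace ℝ (Fin n)), e⟫ ^ 2)
    ∂(volume : Measure (EuclideanSpace ℝ (Fin n))).toSphere) /
  ((volume : Measure (EuclideanSpace ℝ (Fin n))).toSphere Set.univ)

/-- The interaction kernel `ω_δ`: measurable, nonnegative, radial, supported in `B(0,δ)`,
and normalized so that `∫ |z|² ω_δ(z)² dz = K_{2,n}⁻¹` (with `e` a unit vector). -/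
structure IsKernel (n : ℕ) (δ : ℝ) (e : EuclideanSpace ℝ (Fin n))
    (ω : EuclideanSpace ℝ (Fin n) → ℝ) : Prop where
  meas : Measurable ω
  nonneg : ∀ z, 0 ≤ ω z
  radial : ∀ z z', ‖z‖ = ‖z'‖ → ω z = ω z'
  supp : ∀ z, δ ≤ ‖z‖ → ω z = 0
  norm : (∫⁻ z, ENNReal.ofReal (‖z‖ ^ 2 * ω z ^ 2)) = (K2 n e)⁻¹

/-- The nonlocal two-point gradient `Ĝ_δ u (x,x') = (u(x) − u(x')) ω_δ(x − x')`. -/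
def nlGrad {n : ℕ} (ω : EuclideanSpace ℝ (Fin n) → ℝ) (u : EuclideanSpace ℝ (Fin n) → ℝ)
    (x x' : EuclideanSpace ℝ (Fin n)) : ℝ :=
  (u x - u x') * ω (x - x')

/-- The mixed `L^{1,2}` norm of a two-point function on `D × D`, with values in `[0,∞]`. -/
def N12 {n : ℕ} (D : Set (EuclideanSpace ℝ (Fin n)))
    (q : EuclideanSpace ℝ (Fin n) → EuclideanSpace ℝ (Fin n) → ℝ) : ℝ≥0∞ :=
  ∫⁻ x in D, (∫⁻ x' in D, ENNReal.ofReal (q x x' ^ 2)) ^ (1/2 : ℝ)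

/-- The mixed `L^{∞,2}` norm of a two-point function on `D × D`, with values in `[0,∞]`. -/
def Ninf2 {n : ℕ} (D : Set (EuclideanSpace ℝ (Fin n)))
    (q : EuclideanSpace ℝ (Fin n) → EuclideanSpace ℝ (Fin n) → ℝ) : ℝ≥0∞ :=
  essSup (fun x => (∫⁻ x' in D, ENNReal.ofReal (q x x' ^ 2)) ^ (1/2 : ℝ))
    (volume.restrict D)

/-- The squared `L²` norm of a two-point function on `D × D`, with values in `[0,∞]`. -/
def L2sq {n : ℕ} (D : Set (EuclideanSpace ℝ (Fin n)))
    (q : EuclideanSpace ℝ (Fin n) → EuclideanSpace ℝ (Fin n) → ℝ) : ℝ≥0∞ :=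
  ∫⁻ x in D, ∫⁻ x' in D, ENNReal.ofReal (q x x' ^ 2)

lemma K2_ne_zero {n : ℕ} (e : EuclideanSpace ℝ (Fin n)) (he : ‖e‖ = 1) : K2 n e ≠ 0 := by
  have hcont : Continuous (fun s : sphere (0 : EuclideanSpace ℝ (Fin n)) 1 =>
      ENNReal.ofReal (⟪(s : EuclideanSpace ℝ (Fin n)), e⟫ ^ 2)) :=
    ENNReal.continuous_ofReal.comp (by fun_prop)
  refine (ENNReal.div_pos ?_ (measure_ne_top _ _)).ne'
  refine ((lintegral_pos_iff_support hcont.measurable).2 ?_).ne'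
  refine hcont.isOpen_support.measure_pos _ ⟨⟨e, by simp [he]⟩, ?_⟩
  simp [he]

lemma kernel_mass_ne_top {n : ℕ} {δ : ℝ} {e : EuclideanSpace ℝ (Fin n)} (he : ‖e‖ = 1)
    {ω : EuclideanSpace ℝ (Fin n) → ℝ} (hω : IsKernel n δ e ω) :
    ∫⁻ z, ENNReal.ofReal (‖z‖ ^ 2 * ω z ^ 2) ≠ ⊤ := by
  rw [hω.norm]
  exact ENNReal.inv_ne_top.2 (K2_ne_zero e he)

/-- The largest mass that a nonnegative density `h`, translated and reflected, puts on `S`. -/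
def transMass {n : ℕ} (h : EuclideanSpace ℝ (Fin n) → ℝ≥0∞)
    (S : Set (EuclideanSpace ℝ (Fin n))) : ℝ≥0∞ :=
  ⨆ x, ∫⁻ y in S, h (x - y)

lemma transMass_le {n : ℕ} (h : EuclideanSpace ℝ (Fin n) → ℝ≥0∞)
    (S : Set (EuclideanSpace ℝ (Fin n))) : transMass h S ≤ ∫⁻ z, h z := by
  refine iSup_le fun x => (setLIntegral_le_lintegral _ _).trans ?_
  rw [lintegral_sub_left_eq_self h x]

/-- Absolute continuity of the integral, uniform over all translates because reflected translations
preserve Lebesgue measure. -/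
lemma tendsto_transMass {n : ℕ} {h : EuclideanSpace ℝ (Fin n) → ℝ≥0∞}
    (hfin : ∫⁻ z, h z ≠ ⊤) {E : ℕ → Set (EuclideanSpace ℝ (Fin n))}
    (hE : Tendsto (fun m => volume (E m)) atTop (𝓝 0)) :
    Tendsto (fun m => transMass h (E m)) atTop (𝓝 0) := by
  rw [ENNReal.tendsto_nhds_zero]
  intro ε hε
  obtain ⟨η, hη, H⟩ := exists_pos_setLIntegral_lt_of_measure_lt hfin hε.ne'
  filter_upwards [hE.eventually (gt_mem_nhds hη)] with m hm
  refine iSup_le fun x => ?_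
  have hmp : MeasurePreserving (fun y => x - y)
      (volume : Measure (EuclideanSpace ℝ (Fin n))) volume := Measure.measurePreserving_sub_left _ x
  have hemb : MeasurableEmbedding (fun y : EuclideanSpace ℝ (Fin n) => x - y) :=
    (MeasurableEquiv.subLeft x).measurableEmbedding
  rw [hmp.setLIntegral_comp_emb hemb h (E m)]
  refine (H _ ?_).le
  rwa [← hmp.measure_preimage_emb hemb, Set.preimage_image_eq _ hemb.injective]

lemma nlGrad_swap {n : ℕ} {δ : ℝ} {e : EuclideanSpace ℝ (Fin n)}
    {ω : EuclideanSpace ℝ (Fin n) → ℝ} (hω : IsKernel n δ e ω)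
    (v : EuclideanSpace ℝ (Fin n) → ℝ) (x y : EuclideanSpace ℝ (Fin n)) :
    nlGrad ω v y x = -nlGrad ω v x y := by
  unfold nlGrad
  rw [hω.radial (y - x) (x - y) (norm_sub_rev y x)]
  ring

/-- The Lipschitz bound `|v x - v y| ≤ L |x - y|` turns the kernel weight `ω²` into the integrable
density `|z|² ω²`. -/
lemma nlGrad_section_le {n : ℕ} {ω v : EuclideanSpace ℝ (Fin n) → ℝ} {L : NNReal}
    (hv : LipschitzWith L v) (S : Set (EuclideanSpace ℝ (Fin n)))
    (x : EuclideanSpace ℝ (Fin n)) :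
    (∫⁻ y in S, ENNReal.ofReal (nlGrad ω v x y ^ 2)) ^ (1/2 : ℝ) ≤
      (ENNReal.ofReal ((L : ℝ) ^ 2) *
        transMass (fun z => ENNReal.ofReal (‖z‖ ^ 2 * ω z ^ 2)) S) ^ (1/2 : ℝ) := by
  refine ENNReal.rpow_le_rpow ?_ (by norm_num)
  calc ∫⁻ y in S, ENNReal.ofReal (nlGrad ω v x y ^ 2)
      ≤ ∫⁻ y in S, ENNReal.ofReal ((L : ℝ) ^ 2) *
          ENNReal.ofReal (‖x - y‖ ^ 2 * ω (x - y) ^ 2) := by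
        refine lintegral_mono fun y => ?_
        rw [← ENNReal.ofReal_mul (by positivity)]
        refine ENNReal.ofReal_le_ofReal ?_
        have h1 : |v x - v y| ≤ L * ‖x - y‖ := by
          simpa [Real.norm_eq_abs] using hv.norm_sub_le x y
        have h2 : (v x - v y) ^ 2 ≤ (L * ‖x - y‖) ^ 2 := by
          rw [← sq_abs]; gcongr
        calc nlGrad ω v x y ^ 2 = (v x - v y) ^ 2 * ω (x - y) ^ 2 := by
              unfold nlGrad; ring
          _ ≤ (L * ‖x - y‖) ^ 2 * ω (x - y) ^ 2 := by gcongr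
          _ = _ := by ring
    _ = ENNReal.ofReal ((L : ℝ) ^ 2) *
          ∫⁻ y in S, ENNReal.ofReal (‖x - y‖ ^ 2 * ω (x - y) ^ 2) :=
        lintegral_const_mul' _ _ ENNReal.ofReal_ne_top
    _ ≤ _ := by
        gcongr
        exact le_iSup (fun x => ∫⁻ y in S, ENNReal.ofReal (‖x - y‖ ^ 2 * ω (x - y) ^ 2)) x

/-- Hölder's inequality for the pairing of `L^{1,2}` with `L^{∞,2}`: Cauchy–Schwarz in the inner
variable. -/
lemma lintegral_enorm_mul_le {α β : Type*} [MeasurableSpace α] [MeasurableSpace β]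
    (μ : Measure α) (ν : Measure β) [SFinite μ] [SFinite ν] {q p : α → β → ℝ}
    (hq : Measurable (Function.uncurry q)) (hp : Measurable (Function.uncurry p)) {C : ℝ≥0∞}
    (hC : ∀ x, (∫⁻ y, ENNReal.ofReal (p x y ^ 2) ∂ν) ^ (1/2 : ℝ) ≤ C) :
    ∫⁻ z, ‖q z.1 z.2 * p z.1 z.2‖ₑ ∂(μ.prod ν) ≤
      (∫⁻ x, (∫⁻ y, ENNReal.ofReal (q x y ^ 2) ∂ν) ^ (1/2 : ℝ) ∂μ) * C := by
  have hsq : ∀ t : ℝ, ‖t‖ₑ ^ (2 : ℝ) = ENNReal.ofReal (t ^ 2) := fun t => by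
    rw [ENNReal.rpow_two, ← sq_abs, ENNReal.ofReal_pow (abs_nonneg t), Real.enorm_eq_ofReal_abs]
  have hq1 : Measurable (fun z : α × β => q z.1 z.2) := hq
  have hp1 : Measurable (fun z : α × β => p z.1 z.2) := hp
  have hmeas : Measurable (fun x => (∫⁻ y, ENNReal.ofReal (q x y ^ 2) ∂ν) ^ (1/2 : ℝ)) := by
    refine Measurable.pow_const (Measurable.lintegral_prod_right' (ν := ν)
      (f := fun z : α × β => ENNReal.ofReal (q z.1 z.2 ^ 2)) ?_) _
    fun_prop
  rw [lintegral_prod _ (by fun_prop), ← lintegral_mul_const _ hmeas]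
  refine lintegral_mono fun x => ?_
  have hqx : Measurable (q x) := hq1.comp measurable_prodMk_left
  have hpx : Measurable (p x) := hp1.comp measurable_prodMk_left
  have H := ENNReal.lintegral_mul_le_Lp_mul_Lq ν Real.HolderConjugate.two_two
    (f := fun y => ‖q x y‖ₑ) (g := fun y => ‖p x y‖ₑ) (by fun_prop) (by fun_prop)
  simp only [Pi.mul_apply, hsq] at H
  simp only [enorm_mul]
  exact H.trans (mul_le_mul' le_rfl (hC x))

section Splitting

variable {X : Type*} [MeasurableSpace X] {μ : Measure X} {f : X × X → ℝ} {D E : Set X}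

lemma setIntegral_split_left (hf : IntegrableOn f (D ×ˢ D) (μ.prod μ))
    (hD : MeasurableSet D) (hE : MeasurableSet E) (hED : E ⊆ D) :
    ∫ z in D ×ˢ D, f z ∂μ.prod μ =
      ∫ z in (D \ E) ×ˢ D, f z ∂μ.prod μ + ∫ z in E ×ˢ D, f z ∂μ.prod μ := by
  have hu : D ×ˢ D = ((D \ E) ×ˢ D) ∪ (E ×ˢ D) := by
    rw [← Set.union_prod, Set.sdiff_union_of_subset hED]
  conv_lhs => rw [hu]
  refine setIntegral_union (Set.disjoint_prod.2 (Or.inl Set.disjoint_sdiff_left))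
    (hE.prod hD) (hf.mono_set ?_) (hf.mono_set ?_)
  · exact Set.prod_mono Set.sdiff_subset le_rfl
  · exact Set.prod_mono hED le_rfl

/-- For a symmetric integrand the strip `E × (D \ E)` may be traded for `(D \ E) × E`, so only the
square `E × E` is left outside of `(D \ E) × D`. -/
lemma setIntegral_split_symm [SFinite μ] (hf : IntegrableOn f (D ×ˢ D) (μ.prod μ))
    (hD : MeasurableSet D) (hE : MeasurableSet E) (hED : E ⊆ D)
    (hs : ∀ᵐ z ∂(μ.prod μ).restrict (D ×ˢ D), f z.swap = f z) :
    ∫ z in D ×ˢ D, f z ∂μ.prod μ =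
      ∫ z in (D \ E) ×ˢ D, f z ∂μ.prod μ + ∫ z in (D \ E) ×ˢ E, f z ∂μ.prod μ
        + ∫ z in E ×ˢ E, f z ∂μ.prod μ := by
  have hu : E ×ˢ D = (E ×ˢ (D \ E)) ∪ (E ×ˢ E) := by
    rw [← Set.prod_union, Set.sdiff_union_of_subset hED]
  have h2 : ∫ z in E ×ˢ D, f z ∂μ.prod μ =
      ∫ z in E ×ˢ (D \ E), f z ∂μ.prod μ + ∫ z in E ×ˢ E, f z ∂μ.prod μ := by
    rw [hu]
    refine setIntegral_union (Set.disjoint_prod.2 (Or.inr Set.disjoint_sdiff_left))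
      (hE.prod hE) (hf.mono_set ?_) (hf.mono_set ?_)
    · exact Set.prod_mono hED Set.sdiff_subset
    · exact Set.prod_mono hED hED
  have h3 : ∫ z in E ×ˢ (D \ E), f z ∂μ.prod μ = ∫ z in (D \ E) ×ˢ E, f z ∂μ.prod μ := by
    rw [← setIntegral_prod_swap]
    refine integral_congr_ae (ae_restrict_of_ae_restrict_of_subset ?_ hs)
    exact Set.prod_mono Set.sdiff_subset hED
  rw [setIntegral_split_left hf hD hE hED, h2, h3, add_assoc]

end Splitting

/-- Continuity of the nonlocal divergence with respect to biting
convergence of bounded antisymmetric sequences in `L^{1,2}`: the nonlocal divergences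
converge weakly-* in the dual of `W^{1,∞}_0(Ω)`. -/
theorem stmt11 {n : ℕ} (hn : 2 ≤ n) (Ω : Set (EuclideanSpace ℝ (Fin n)))
    (hΩo : IsOpen Ω) (hΩb : Bornology.IsBounded Ω) (hΩconn : IsConnected Ω)
    (hΩlip : HasLipschitzBoundary Ω)
    (δ : ℝ) (hδ : 0 < δ) (e : EuclideanSpace ℝ (Fin n)) (he : ‖e‖ = 1)
    (ω : EuclideanSpace ℝ (Fin n) → ℝ) (hω : IsKernel n δ e ω)
    (q : ℕ → EuclideanSpace ℝ (Fin n) → EuclideanSpace ℝ (Fin n) → ℝ)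
    (hqm : ∀ k, Measurable (Function.uncurry (q k)))
    (hqa : ∀ k, ∀ᵐ p ∂((volume.restrict (thickening δ Ω)).prod
      (volume.restrict (thickening δ Ω))), q k p.1 p.2 = -q k p.2 p.1)
    (hqb : ∀ k, N12 (thickening δ Ω) (q k) ≤ 1)
    (qhat : EuclideanSpace ℝ (Fin n) → EuclideanSpace ℝ (Fin n) → ℝ)
    (hqhm : Measurable (Function.uncurry qhat))
    (hqhfin : N12 (thickening δ Ω) qhat < ⊤)
    (E : ℕ → Set (EuclideanSpace ℝ (Fin n)))
    (hEm : ∀ m, MeasurableSet (E m) ∧ E m ⊆ thickening δ Ω) (hEa : Antitone E)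
    (hE0 : Tendsto (fun m => volume (E m)) atTop (𝓝 0))
    (hbite : ∀ m, ∀ p : EuclideanSpace ℝ (Fin n) → EuclideanSpace ℝ (Fin n) → ℝ,
      Measurable (Function.uncurry p) →
      essSup (fun x => (∫⁻ x' in thickening δ Ω, ENNReal.ofReal (p x x' ^ 2)) ^ (1/2 : ℝ))
          (volume.restrict (thickening δ Ω \ E m)) < ⊤ →
      Tendsto (fun k => ∫ x in thickening δ Ω \ E m, ∫ x' in thickening δ Ω,
          (q k x x' - qhat x x') * p x x') atTop (𝓝 0)) :
    ∀ v : EuclideanSpace ℝ (Fin n) → ℝ, (∃ L : NNReal, LipschitzWith L v) →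
      (∀ x ∉ Ω, v x = 0) →
      Tendsto (fun k => ∫ x in thickening δ Ω, ∫ x' in thickening δ Ω,
          q k x x' * nlGrad ω v x x') atTop
        (𝓝 (∫ x in thickening δ Ω, ∫ x' in thickening δ Ω,
          qhat x x' * nlGrad ω v x x')) := by
  rintro v ⟨L, hL⟩ -
  set D := thickening δ Ω with hDdef
  set G := nlGrad ω v with hGdef
  have hD : MeasurableSet D := isOpen_thickening.measurableSet
  set h : EuclideanSpace ℝ (Fin n) → ℝ≥0∞ := fun z => ENNReal.ofReal (‖z‖ ^ 2 * ω z ^ 2)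
  have hfin : ∫⁻ z, h z ≠ ⊤ := kernel_mass_ne_top he hω
  set M : Set (EuclideanSpace ℝ (Fin n)) → ℝ≥0∞ :=
    fun S => (ENNReal.ofReal ((L : ℝ) ^ 2) * transMass h S) ^ (1/2 : ℝ) with hM
  have hMfin : ∀ S, M S ≠ ⊤ := fun S => ENNReal.rpow_ne_top_of_nonneg (by norm_num)
    (ENNReal.mul_ne_top ENNReal.ofReal_ne_top (ne_top_of_le_ne_top hfin (transMass_le h S)))
  have hMlim : Tendsto (fun m => M (E m)) atTop (𝓝 0) := by
    have h1 := ENNReal.Tendsto.const_mul (a := ENNReal.ofReal ((L : ℝ) ^ 2))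
      (tendsto_transMass hfin hE0) (Or.inr ENNReal.ofReal_ne_top)
    have h2 := h1.ennrpow_const (1/2 : ℝ)
    rwa [mul_zero, ENNReal.zero_rpow_of_pos (by norm_num)] at h2
  have hGM : ∀ S x, (∫⁻ y in S, ENNReal.ofReal (G x y ^ 2)) ^ (1/2 : ℝ) ≤ M S :=
    fun S x => nlGrad_section_le hL S x
  have hGm : Measurable (Function.uncurry G) := by
    have hvm := hL.continuous.measurable
    have hωm := hω.meas
    change Measurable fun z : EuclideanSpace ℝ (Fin n) × EuclideanSpace ℝ (Fin n) =>
      (v z.1 - v z.2) * ω (z.1 - z.2)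
    fun_prop
  -- the mixed Hölder inequality on a rectangle contained in `D × D`
  have bound : ∀ r : EuclideanSpace ℝ (Fin n) → EuclideanSpace ℝ (Fin n) → ℝ,
      Measurable (Function.uncurry r) → ∀ A B, B ⊆ D →
      ∫⁻ z in A ×ˢ B, ‖r z.1 z.2 * G z.1 z.2‖ₑ ∂volume.prod volume ≤
        (∫⁻ x in A, (∫⁻ y in D, ENNReal.ofReal (r x y ^ 2)) ^ (1/2 : ℝ)) * M B := by
    intro r hr A B hB
    rw [← Measure.prod_restrict]
    refine (lintegral_enorm_mul_le _ _ hr hGm (hGM B)).trans (mul_le_mul' ?_ le_rfl)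
    refine lintegral_mono fun x => ENNReal.rpow_le_rpow ?_ (by norm_num)
    exact lintegral_mono_set hB
  have integ : ∀ r : EuclideanSpace ℝ (Fin n) → EuclideanSpace ℝ (Fin n) → ℝ,
      Measurable (Function.uncurry r) → N12 D r < ⊤ →
      IntegrableOn (fun z => r z.1 z.2 * G z.1 z.2) (D ×ˢ D) (volume.prod volume) := by
    intro r hr hrf
    refine ⟨(Measurable.mul hr hGm).aestronglyMeasurable, ?_⟩
    exact (bound r hr D D le_rfl).trans_lt (ENNReal.mul_lt_top hrf (hMfin D).lt_top)
  have hqI := fun k => integ (q k) (hqm k) ((hqb k).trans_lt one_lt_top)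
  have hhI := integ qhat hqhm hqhfin
  set f : ℕ → EuclideanSpace ℝ (Fin n) × EuclideanSpace ℝ (Fin n) → ℝ :=
    fun k z => q k z.1 z.2 * G z.1 z.2 with hf
  set g : EuclideanSpace ℝ (Fin n) × EuclideanSpace ℝ (Fin n) → ℝ :=
    fun z => qhat z.1 z.2 * G z.1 z.2 with hg
  have hsym : ∀ k, ∀ᵐ z ∂((volume : Measure (EuclideanSpace ℝ (Fin n))).prod volume).restrict
      (D ×ˢ D), f k z.swap = f k z := by
    intro k
    rw [← Measure.prod_restrict]
    filter_upwards [hqa k] with z hz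
    simp only [hf, Prod.fst_swap, Prod.snd_swap, hz, hGdef, nlGrad_swap hω v z.1 z.2]
    ring
  -- biting convergence on the two rectangles whose first factor is `D \ E m`
  have hA : ∀ m, Tendsto (fun k => ∫ z in (D \ E m) ×ˢ D, (f k z - g z) ∂volume.prod volume)
      atTop (𝓝 0) := by
    intro m
    refine (hbite m G hGm ?_).congr fun k => ?_
    · refine (essSup_le_of_ae_le (M D) (ae_of_all _ fun x => hGM D x)).trans_lt (hMfin D).lt_top
    · have hi := ((hqI k).sub hhI).mono_set
        (Set.prod_mono (Set.sdiff_subset : D \ E m ⊆ D) (le_refl D))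
      refine Eq.trans ?_ (setIntegral_prod _ hi).symm
      simp only [sub_mul, hg, Pi.sub_apply]
  have hB : ∀ m, Tendsto (fun k => ∫ z in (D \ E m) ×ˢ E m, (f k z - g z) ∂volume.prod volume)
      atTop (𝓝 0) := by
    intro m
    have hind : ∀ x, ∀ y, (E m).indicator (G x) y ^ 2 ≤ G x y ^ 2 := fun x y => by
      by_cases hy : y ∈ E m <;> simp [hy, sq_nonneg]
    refine (hbite m (fun x y => (E m).indicator (G x) y) ?_ ?_).congr fun k => ?_
    · have h1 := hGm.indicator (measurable_snd (hEm m).1)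
      exact h1
    · refine (essSup_le_of_ae_le (M D) (ae_of_all _ fun x => ?_)).trans_lt (hMfin D).lt_top
      refine le_trans (ENNReal.rpow_le_rpow ?_ (by norm_num)) (hGM D x)
      exact lintegral_mono fun y => ENNReal.ofReal_le_ofReal (hind x y)
    · have hi := ((hqI k).sub hhI).mono_set
        (Set.prod_mono (Set.sdiff_subset : D \ E m ⊆ D) (hEm m).2)
      refine Eq.trans ?_ (setIntegral_prod _ hi).symm
      refine integral_congr_ae (ae_of_all _ fun x => ?_)
      have h1 : ∀ y, (q k x y - qhat x y) * (E m).indicator (G x) y =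
          (E m).indicator (fun y => f k (x, y) - g (x, y)) y := fun y => by
        by_cases hy : y ∈ E m <;> simp [hy, hf, hg, sub_mul]
      simp only [h1]
      rw [setIntegral_indicator (hEm m).1, Set.inter_eq_right.2 (hEm m).2]
      rfl
  -- the contributions of `q k` and `qhat` near `E m`, bounded independently of `k`
  set R : ℕ → ℝ≥0∞ := fun m => 1 * M (E m) + N12 D qhat * M (E m) +
    (∫⁻ x in E m, (∫⁻ y in D, ENNReal.ofReal (qhat x y ^ 2)) ^ (1/2 : ℝ)) * M D with hR
  have hRlim : Tendsto R atTop (𝓝 0) := by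
    have h1 : Tendsto (fun m => ∫⁻ x in E m,
        (∫⁻ y in D, ENNReal.ofReal (qhat x y ^ 2)) ^ (1/2 : ℝ)) atTop (𝓝 0) := by
      have h2 := tendsto_setLIntegral_zero (μ := volume.restrict D) (s := E) (l := atTop)
        (f := fun x => (∫⁻ y in D, ENNReal.ofReal (qhat x y ^ 2)) ^ (1/2 : ℝ)) hqhfin.ne
        (tendsto_of_tendsto_of_tendsto_of_le_of_le tendsto_const_nhds hE0 (fun _ => zero_le)
          (fun m => Measure.restrict_apply_le _ _))
      refine h2.congr fun m => ?_
      rw [Measure.restrict_restrict (hEm m).1, Set.inter_eq_left.2 (hEm m).2]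
    have := ((ENNReal.Tendsto.const_mul hMlim (Or.inr one_ne_top)).add
      (ENNReal.Tendsto.const_mul hMlim (Or.inr hqhfin.ne))).add
      (ENNReal.Tendsto.mul_const h1 (Or.inr (hMfin D)))
    simpa only [mul_zero, zero_mul, add_zero] using this
  have key : ∀ m k, ‖(∫ z in D ×ˢ D, f k z ∂volume.prod volume)
        - ∫ z in D ×ˢ D, g z ∂volume.prod volume‖ₑ ≤
      ‖(∫ z in (D \ E m) ×ˢ D, (f k z - g z) ∂volume.prod volume)
        + ∫ z in (D \ E m) ×ˢ E m, (f k z - g z) ∂volume.prod volume‖ₑ + R m := by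
    intro m k
    have hs1 : (D \ E m) ×ˢ D ⊆ D ×ˢ D := Set.prod_mono Set.sdiff_subset le_rfl
    have hs2 : (D \ E m) ×ˢ E m ⊆ D ×ˢ D := Set.prod_mono Set.sdiff_subset (hEm m).2
    have hb1 : ‖∫ z in E m ×ˢ E m, f k z ∂volume.prod volume‖ₑ ≤ 1 * M (E m) := by
      refine (enorm_integral_le_lintegral_enorm _).trans
        ((bound _ (hqm k) _ _ (hEm m).2).trans (mul_le_mul' ?_ le_rfl))
      exact (lintegral_mono_set (hEm m).2).trans (hqb k)
    have hb2 : ‖∫ z in (D \ E m) ×ˢ E m, g z ∂volume.prod volume‖ₑ ≤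
        N12 D qhat * M (E m) := by
      refine (enorm_integral_le_lintegral_enorm _).trans
        ((bound _ hqhm _ _ (hEm m).2).trans (mul_le_mul' ?_ le_rfl))
      exact lintegral_mono_set Set.sdiff_subset
    have hb3 := (enorm_integral_le_lintegral_enorm _).trans (bound _ hqhm (E m) D le_rfl)
    rw [setIntegral_split_symm (hqI k) hD (hEm m).1 (hEm m).2 (hsym k),
      setIntegral_split_left hhI hD (hEm m).1 (hEm m).2,
      integral_sub ((hqI k).mono_set hs1) (hhI.mono_set hs1),
      integral_sub ((hqI k).mono_set hs2) (hhI.mono_set hs2)]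
    have halg : ∀ a b c d e' s : ℝ, a + b + c - (d + e') =
        ((a - d) + (b - s)) + ((c + s) - e') := fun a b c d e' s => by ring
    rw [halg _ _ _ _ _ (∫ z in (D \ E m) ×ˢ E m, g z ∂volume.prod volume)]
    refine (enorm_add_le _ _).trans (add_le_add le_rfl ?_)
    exact (enorm_sub_le).trans (add_le_add ((enorm_add_le _ _).trans (add_le_add hb1 hb2)) hb3)
  have main : Tendsto (fun k => ∫ z in D ×ˢ D, f k z ∂volume.prod volume) atTop
      (𝓝 (∫ z in D ×ˢ D, g z ∂volume.prod volume)) := by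
    rw [tendsto_iff_edist_tendsto_0, ENNReal.tendsto_nhds_zero]
    intro ε hε
    have hε2 : 0 < ε / 2 := ENNReal.half_pos hε.ne'
    obtain ⟨m, hm⟩ := ((ENNReal.tendsto_nhds_zero.1 hRlim) _ hε2).exists
    have hAB := ((hA m).add (hB m)).enorm
    rw [add_zero, enorm_zero] at hAB
    filter_upwards [(ENNReal.tendsto_nhds_zero.1 hAB) _ hε2] with k hk
    rw [edist_eq_enorm_sub]
    exact (key m k).trans ((add_le_add hk hm).trans_eq (ENNReal.add_halves ε))
  rw [setIntegral_prod _ hhI] at main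
  exact main.congr fun k => setIntegral_prod _ (hqI k)
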